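/- Let 1 ≤ m ≤ d and let f : [0,1]^d → ℝ^m be a C^{1,α} function for some α ∈ (0,1], i.e. Df has finite Hölder seminorm ‖Df‖_{C^{0,α}} = sup_{x≠y} |Df(x)−Df(y)|/|x−y|^α. Then there exist a constant C_{[d,α]} > 0 depending only on d and α, and ε₀ > 0, such that for every 0 < ε ≤ ε₀, N_f(ε) ≤ C_{[d,α]} · (‖Df‖_{C^{0,α}}/ε)^{1/α}. -/

import Mathlib

open MeasureTheory Set Topology
open scoped ENNReal

noncomputable section

abbrev E (n : ℕ) : Type := EuclideanSpace ℝ (Fin n)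

def unitCube (d : ℕ) : Set (E d) := {x | ∀ i, x i ∈ Set.Icc (0:ℝ) 1}

def openCube (d : ℕ) : Set (E d) := {x | ∀ i, x i ∈ Set.Ioo (0:ℝ) 1}

/-- Jacobian matrix of `f` at `x`. -/
def jac {d m : ℕ} (f : E d → E m) (x : E d) : Matrix (Fin m) (Fin d) ℝ :=
  Matrix.of fun i j => fderiv ℝ f x (EuclideanSpace.single j 1) i

/-- Critical set of `g` in the open unit cube. -/
def critSet {d m : ℕ} (g : E d → E m) : Set (E d) :=
  {x ∈ openCube d | (jac g x).rank ≤ m - 1}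

/-- `N_f(ε)`. -/
def Nf {d m : ℕ} (f : E d → E m) (ε : ℝ) : ℝ≥0∞ :=
  sInf { h : ℝ≥0∞ | ∃ g : E d → E m, ContDiff ℝ 1 g ∧
    (∀ x ∈ unitCube d, ‖g x - f x‖ ≤ ε ∧ ‖fderiv ℝ g x - fderiv ℝ f x‖ ≤ ε) ∧
    h = μH[(d:ℝ) - 1] (critSet g) }

/-- minimal modulus of continuity of `Df` on `U`. -/
def omegaC1 {d m : ℕ} (f : E d → E m) (U : Set (E d)) (δ : ℝ) : ℝ :=
  sSup {r : ℝ | ∃ x ∈ U, ∃ y ∈ U, ‖x - y‖ ≤ δ ∧ r = ‖fderiv ℝ f x - fderiv ℝ f y‖}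

def betaf {d m : ℕ} (f : E d → E m) (δ : ℝ) : ℝ :=
  omegaC1 f (unitCube d) (Real.sqrt d * δ) *
    (1 + Real.sqrt d * δ + 4 * (d:ℝ) ^ ((d:ℝ) + 1/2) * ((d:ℝ)+1)^4)

end


lemma mvp_hasStrictFDerivAt {n : ℕ} (P : MvPolynomial (Fin n) ℝ) (x : Fin n → ℝ) :
    HasStrictFDerivAt (fun x : Fin n → ℝ => MvPolynomial.eval x P)
      (∑ j, MvPolynomial.eval x (MvPolynomial.pderiv j P) •
        (ContinuousLinearMap.proj j : (Fin n → ℝ) →L[ℝ] ℝ)) x := by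
  induction P using MvPolynomial.induction_on with
  | C a => 
    simpa using hasStrictFDerivAt_const (𝕜 := ℝ) a x
  | add p q hp hq =>
    simp only [map_add, add_smul, Finset.sum_add_distrib]
    exact hp.add hq
  | mul_X p i hp =>
    have h := hp.mul (hasStrictFDerivAt_apply (𝕜 := ℝ) i x)
    simp only [map_mul, MvPolynomial.eval_X]
    refine h.congr_fderiv ?_
    symm
    refine ContinuousLinearMap.ext fun v => ?_
    have : ∀ j, MvPolynomial.eval x (MvPolynomial.pderiv j (p * MvPolynomial.X i)) * v j
      = x i * (MvPolynomial.eval x (MvPolynomial.pderiv j p) * v j)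
        + (if j = i then MvPolynomial.eval x p * v j else 0) := by
      intro j
      rw [MvPolynomial.pderiv_mul, MvPolynomial.pderiv_X]
      by_cases h : j = i
      · subst h; simp; ring
      · simp [h, Pi.single_apply, Ne.symm h]; ring
    simp only [ContinuousLinearMap.sum_apply, ContinuousLinearMap.smul_apply,
      ContinuousLinearMap.proj_apply, smul_eq_mul, this, Finset.sum_add_distrib,
      ContinuousLinearMap.add_apply, Finset.mul_sum, Finset.sum_ite_eq', Finset.mem_univ, if_true]
    ring

lemma mvp_continuous {n : ℕ} (P : MvPolynomial (Fin n) ℝ) :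
    Continuous (fun x : Fin n → ℝ => MvPolynomial.eval x P) := MvPolynomial.continuous_eval P

lemma exists_pderiv {n D : ℕ} (P : MvPolynomial (Fin n) ℝ) (hP : P ≠ 0) (hD : P.totalDegree ≤ D + 1) :
    (∃ a : ℝ, a ≠ 0 ∧ P = MvPolynomial.C a) ∨
    ∃ i, MvPolynomial.pderiv i P ≠ 0 ∧ (MvPolynomial.pderiv i P).totalDegree ≤ D := by
  by_cases h0 : P.totalDegree = 0
  · left
    have := MvPolynomial.totalDegree_eq_zero_iff_eq_C.1 h0
    refine ⟨_, ?_, this⟩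
    intro h; rw [h] at this; simp at this; exact hP this
  right
  have : ∃ m ∈ P.support, ∃ i, m i ≠ 0 := by
    by_contra! hcon
    apply h0
    rw [MvPolynomial.totalDegree_eq_zero_iff_eq_C]
    ext m
    rw [MvPolynomial.coeff_C]
    split_ifs with h
    · rw [h]
    · by_contra hne
      apply h
      ext i
      simpa using (hcon m (MvPolynomial.mem_support_iff.2 hne) i).symm
  obtain ⟨m, hm, i, hi⟩ := this
  refine ⟨i, ?_, ?_⟩
  · intro hz
    have h1 := MvPolynomial.coeff_pderiv (i := i) P (m - Finsupp.single i 1)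
    have hle : Finsupp.single i 1 ≤ m := by
      rw [Finsupp.single_le_iff]; omega
    rw [hz, tsub_add_cancel_of_le hle] at h1
    rw [MvPolynomial.mem_support_iff] at hm
    simp at h1
    rcases h1 with h1 | h1
    · exact hm h1
    · have : (0:ℝ) ≤ ((m i - 1 : ℕ):ℝ) := by positivity
      linarith
  · rw [MvPolynomial.totalDegree, Finset.sup_le_iff]
    intro b hb
    rw [MvPolynomial.mem_support_iff, MvPolynomial.coeff_pderiv] at hb
    have h1 : b + Finsupp.single i 1 ∈ P.support := by
      rw [MvPolynomial.mem_support_iff]; exact left_ne_zero_of_mul hb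
    have h2 := MvPolynomial.le_totalDegree h1
    rw [Finsupp.sum_add_index' (by simp) (by simp)] at h2
    simp at h2
    omega

lemma slice_poly {n D : ℕ} (P : MvPolynomial (Fin (n+1)) ℝ) (hD : P.totalDegree ≤ D) (i : Fin (n+1))
    (y : Fin n → ℝ) : ∃ r : Polynomial ℝ, r.natDegree ≤ D ∧
      ∀ t, r.eval t = MvPolynomial.eval (i.insertNth t y : Fin (n+1) → ℝ) P := by
  refine ⟨MvPolynomial.aeval (i.insertNth (α := fun _ => Polynomial ℝ) Polynomial.X (fun j => Polynomial.C (y j))) P, ?_, ?_⟩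
  · refine (MvPolynomial.aeval_natDegree_le _ hD _ (n := 1) ?_).trans (by simp)
    intro j
    refine Fin.succAboveCases i ?_ ?_ j <;> simp
  · intro t
    rw [← Polynomial.coe_evalRingHom, MvPolynomial.map_aeval]
    simp
    congr 2
    · ext a; simp
    funext j
    refine Fin.succAboveCases i ?_ ?_ j <;> simp

lemma reg_local {n : ℕ} (P : MvPolynomial (Fin (n+1)) ℝ) (i : Fin (n+1)) (x₀ : Fin (n+1) → ℝ)
    (h0 : MvPolynomial.eval x₀ (MvPolynomial.pderiv i P) ≠ 0)
    (hj : ∀ j, |MvPolynomial.eval x₀ (MvPolynomial.pderiv j P)| ≤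
      |MvPolynomial.eval x₀ (MvPolynomial.pderiv i P)|) :
    ∃ U : Set (Fin (n+1) → ℝ), IsOpen U ∧ x₀ ∈ U ∧ ∀ x ∈ U, ∀ y ∈ U,
      MvPolynomial.eval x P = 0 → MvPolynomial.eval y P = 0 →
      ‖x - y‖ ≤ (2 * n + 1) * ‖i.removeNth x - i.removeNth y‖ := by
  have hs := mvp_hasStrictFDerivAt P x₀
  set q := |MvPolynomial.eval x₀ (MvPolynomial.pderiv i P)| with hq
  have hqpos : 0 < q := abs_pos.2 h0
  have hb := hs.isLittleO.def (c := q / 2) (by positivity)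
  rw [nhds_prod_eq] at hb
  obtain ⟨V, hV, hVb⟩ := Filter.mem_prod_self_iff.1 hb
  obtain ⟨U, hUV, hUo, hxU⟩ := mem_nhds_iff.1 hV
  refine ⟨U, hUo, hxU, fun x hx y hy hPx hPy => ?_⟩
  have h1 := hVb (Set.mk_mem_prod (hUV hx) (hUV hy))
  simp only [mem_setOf_eq]  at h1
  simp only [hPx, hPy] at h1
  set r := ‖i.removeNth x - i.removeNth y‖ with hr
  have hr0 : 0 ≤ r := norm_nonneg _
  have hrj : ∀ j, |x (i.succAbove j) - y (i.succAbove j)| ≤ r := by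
    intro j
    exact norm_le_pi_norm (i.removeNth x - i.removeNth y) j
  have hn : ‖x - y‖ ≤ max |x i - y i| r := by
    rw [pi_norm_le_iff_of_nonneg (by positivity)]
    intro j
    refine Fin.succAboveCases i ?_ ?_ j
    · exact le_max_left _ _
    · intro j; exact (hrj j).trans (le_max_right _ _)
  have h2 : q * |x i - y i| ≤ n * (q * r) + q / 2 * ‖x - y‖ := by
    have e1 : (∑ j, MvPolynomial.eval x₀ (MvPolynomial.pderiv j P) •
        (ContinuousLinearMap.proj j : (Fin (n+1) → ℝ) →L[ℝ] ℝ)) (x - y)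
        = MvPolynomial.eval x₀ (MvPolynomial.pderiv i P) * (x i - y i) +
          ∑ j, MvPolynomial.eval x₀ (MvPolynomial.pderiv (i.succAbove j) P) *
            (x (i.succAbove j) - y (i.succAbove j)) := by
      rw [ContinuousLinearMap.sum_apply, Fin.sum_univ_succAbove _ i]
      simp
    rw [e1] at h1
    set A := MvPolynomial.eval x₀ (MvPolynomial.pderiv i P) * (x i - y i) with hA
    set B := ∑ j, MvPolynomial.eval x₀ (MvPolynomial.pderiv (i.succAbove j) P) *
            (x (i.succAbove j) - y (i.succAbove j)) with hB
    have hBb : |B| ≤ n * (q * r) := by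
      refine (Finset.abs_sum_le_sum_abs _ _).trans ?_
      have : ∀ j ∈ (Finset.univ : Finset (Fin n)), |MvPolynomial.eval x₀ (MvPolynomial.pderiv (i.succAbove j) P) *
            (x (i.succAbove j) - y (i.succAbove j))| ≤ q * r := by
        intro j _
        rw [abs_mul]
        exact mul_le_mul (hj _) (hrj j) (abs_nonneg _) hqpos.le
      refine (Finset.sum_le_sum this).trans ?_
      simp
    have hAe : |A| = q * |x i - y i| := abs_mul _ _
    rw [Real.norm_eq_abs] at h1
    have : |A| ≤ |A + B| + |B| := by
      have := abs_sub (A + B) B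
      simpa using this
    have h1' : |A + B| ≤ q / 2 * ‖x - y‖ := by
      have e : |A + B| = |0 - 0 - (A + B)| := by rw [sub_self, zero_sub, abs_neg]
      rw [e]; exact h1
    linarith
  have h3 : |x i - y i| ≤ n * r + ‖x - y‖ / 2 := by
    have : q * |x i - y i| ≤ q * (n * r + ‖x - y‖ / 2) := by linarith
    exact le_of_mul_le_mul_left this hqpos
  rcases le_total |x i - y i| r with h | h
  · rw [max_eq_right h] at hn
    have : 0 ≤ (n:ℝ) * r := by positivity
    linarith
  · rw [max_eq_left h] at hn
    have : 0 ≤ (n:ℝ) * r := by positivity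
    linarith

lemma mult_bound {n D : ℕ} (P : MvPolynomial (Fin (n+1)) ℝ) (hD : P.totalDegree ≤ D)
    (i : Fin (n+1)) (T : ℕ → Set (Fin (n+1) → ℝ)) (hdisj : Pairwise (Function.onFun Disjoint T))
    (hT : ∀ k, ∀ x ∈ T k, MvPolynomial.eval x P = 0 ∧
      MvPolynomial.eval x (MvPolynomial.pderiv i P) ≠ 0) (y : Fin n → ℝ) :
    ∑' k, (i.removeNth '' T k).indicator (fun _ => (1:ℝ≥0∞)) y ≤ D := by
  classical
  obtain ⟨r, hrD, hr⟩ := slice_poly P hD i y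
  rw [ENNReal.tsum_eq_iSup_sum]
  refine iSup_le fun F => ?_
  have e : ∑ k ∈ F, (i.removeNth '' T k).indicator (fun _ => (1:ℝ≥0∞)) y
      = ((F.filter fun k => y ∈ i.removeNth '' T k).card : ℝ≥0∞) := by
    simp [Set.indicator_apply, Finset.sum_ite]
  rw [e]
  norm_cast
  set F' := F.filter fun k => y ∈ i.removeNth '' T k with hF'
  have hx : ∀ k, k ∈ F' → ∃ t : ℝ, (i.insertNth t y : Fin (n+1) → ℝ) ∈ T k := by
    intro k hk
    obtain ⟨x, hx, hxy⟩ := (Finset.mem_filter.1 hk).2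
    refine ⟨x i, ?_⟩
    rw [← hxy]
    simpa using hx
  choose! t ht using hx
  by_cases hemp : F' = ∅
  · simp [hemp]
  obtain ⟨k0, hk0⟩ := Finset.nonempty_iff_ne_empty.2 hemp
  have hr0 : r ≠ 0 := by
    rintro rfl
    have h1 := (hT k0 _ (ht k0 hk0)).2
    have h2 := (mvp_hasStrictFDerivAt P (i.insertNth (t k0) y : Fin (n+1) → ℝ)).hasFDerivAt
    have h3 : HasDerivAt (fun s : ℝ => (i.insertNth s y : Fin (n+1) → ℝ)) (Pi.single i 1) (t k0) := by
      rw [hasDerivAt_pi]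
      intro j
      refine Fin.succAboveCases i ?_ ?_ j
      · simpa using hasDerivAt_id' (t k0)
      · intro j; simpa using hasDerivAt_const (t k0) (y j)
    have h4 := h2.comp_hasDerivAt (t k0) h3
    have h5 : ((fun x : Fin (n+1) → ℝ => MvPolynomial.eval x P) ∘ 
        fun s : ℝ => (i.insertNth s y : Fin (n+1) → ℝ)) = fun _ => 0 := by
      funext s
      simp [← hr]
    rw [h5] at h4
    have h6 := h4.unique (hasDerivAt_const _ _)
    simp [Pi.single_apply] at h6
    exact h1 h6
  have hc : F'.card ≤ r.roots.toFinset.card := by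
    refine Finset.card_le_card_of_injOn t ?_ ?_
    · intro k hk
      simp only [Finset.mem_coe, Multiset.mem_toFinset, Polynomial.mem_roots hr0, Polynomial.IsRoot.def]
      rw [hr]
      exact (hT k _ (ht k hk)).1
    · intro k hk l hl hkl
      by_contra hne
      have := hdisj hne
      refine Set.disjoint_left.1 this (ht k hk) ?_
      rw [hkl]; exact ht l hl
  exact hc.trans ((Multiset.toFinset_card_le _).trans ((Polynomial.card_roots' r).trans hrD))

lemma reg_bound {n D : ℕ} (P : MvPolynomial (Fin (n+1)) ℝ) (hD : P.totalDegree ≤ D)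
    (i : Fin (n+1)) (a : Fin (n+1) → ℝ) (s : ℝ) :
    μH[(n:ℝ)] {x | x ∈ Icc a (fun j => a j + s) ∧ MvPolynomial.eval x P = 0 ∧
      MvPolynomial.eval x (MvPolynomial.pderiv i P) ≠ 0 ∧
      ∀ j, |MvPolynomial.eval x (MvPolynomial.pderiv j P)| ≤
      |MvPolynomial.eval x (MvPolynomial.pderiv i P)|} ≤
    (2 * n + 1) ^ n * (D * ENNReal.ofReal s ^ n) := by
  set S := {x | x ∈ Icc a (fun j => a j + s) ∧ MvPolynomial.eval x P = 0 ∧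
      MvPolynomial.eval x (MvPolynomial.pderiv i P) ≠ 0 ∧
      ∀ j, |MvPolynomial.eval x (MvPolynomial.pderiv j P)| ≤
      |MvPolynomial.eval x (MvPolynomial.pderiv i P)|} with hS
  have hSm : MeasurableSet S := by
    refine MeasurableSet.inter measurableSet_Icc (MeasurableSet.inter ?_ (MeasurableSet.inter ?_ ?_))
    · exact (isClosed_eq (mvp_continuous _) continuous_const).measurableSet
    · exact (isOpen_ne_fun (mvp_continuous _) continuous_const).measurableSet
    · have : {x : Fin (n+1) → ℝ | ∀ j, |MvPolynomial.eval x (MvPolynomial.pderiv j P)| ≤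
      |MvPolynomial.eval x (MvPolynomial.pderiv i P)|} = ⋂ j, {x | |MvPolynomial.eval x (MvPolynomial.pderiv j P)| ≤
      |MvPolynomial.eval x (MvPolynomial.pderiv i P)|} := by ext; simp
      change MeasurableSet {x : Fin (n+1) → ℝ | ∀ j, |MvPolynomial.eval x (MvPolynomial.pderiv j P)| ≤
      |MvPolynomial.eval x (MvPolynomial.pderiv i P)|}
      rw [this]
      exact (isClosed_iInter fun j => isClosed_le (mvp_continuous _).abs (mvp_continuous _).abs).measurableSet
  rcases S.eq_empty_or_nonempty with hemp | hne
  · rw [hemp]; simp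
  have hloc := fun x₀ : Fin (n+1) → ℝ => fun hx : x₀ ∈ S => reg_local P i x₀ hx.2.2.1 hx.2.2.2
  choose! U hUo hxU hU using hloc
  obtain ⟨t, htS, htc, hcov⟩ := TopologicalSpace.countable_cover_nhdsWithin (f := U) (s := S)
    (fun x hx => mem_nhdsWithin_of_mem_nhds ((hUo x hx).mem_nhds (hxU x hx)))
  have htne : t.Nonempty := by
    obtain ⟨x, hx⟩ := hne
    obtain ⟨z, hz, -⟩ := mem_iUnion₂.1 (hcov hx)
    exact ⟨z, hz⟩
  obtain ⟨e, rfl⟩ := htc.exists_eq_range htne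
  have heS : ∀ k, e k ∈ S := fun k => htS (mem_range_self k)
  set T : ℕ → Set (Fin (n+1) → ℝ) := fun k => S ∩ disjointed (fun k => U (e k)) k with hTdef
  have hTm : ∀ k, MeasurableSet (T k) := fun k => hSm.inter
    (MeasurableSet.disjointed (fun k => (hUo _ (heS k)).measurableSet) k)
  have hTd : Pairwise (Function.onFun Disjoint T) := by
    intro k l hkl
    exact (disjoint_disjointed (fun k => U (e k)) hkl).mono inter_subset_right inter_subset_right
  have hST : S ⊆ ⋃ k, T k := by
    intro x hx
    have h1 := hcov hx
    rw [biUnion_range, ← iUnion_disjointed] at h1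
    obtain ⟨k, hk⟩ := mem_iUnion.1 h1
    exact mem_iUnion.2 ⟨k, hx, hk⟩
  have hlip : ∀ k, ∀ x ∈ T k, ∀ y ∈ T k, ‖x - y‖ ≤ (2 * n + 1) * ‖i.removeNth x - i.removeNth y‖ := by
    intro k x hx y hy
    exact hU (e k) (heS k) x (disjointed_subset (fun k => U (e k)) k hx.2) y (disjointed_subset (fun k => U (e k)) k hy.2) hx.1.2.1 hy.1.2.1
  have hcont : Continuous (fun x : Fin (n+1) → ℝ => i.removeNth x) := by
    unfold Fin.removeNth; fun_prop
  have hinj : ∀ k, InjOn (fun x : Fin (n+1) → ℝ => i.removeNth x) (T k) := by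
    intro k x hx y hy hxy
    have := hlip k x hx y hy
    simp only at hxy
    rw [hxy] at this
    simp at this
    exact sub_eq_zero.1 this
  have hIm : ∀ k, MeasurableSet ((fun x : Fin (n+1) → ℝ => i.removeNth x) '' T k) := fun k =>
    (hTm k).image_of_continuousOn_injOn hcont.continuousOn (hinj k)
  have hTk : ∀ k, μH[(n:ℝ)] (T k) ≤ (2 * n + 1) ^ n * volume ((fun x : Fin (n+1) → ℝ => i.removeNth x) '' T k) := by
    intro k
    set π := (fun x : Fin (n+1) → ℝ => i.removeNth x)
    have hL : LipschitzOnWith (2 * n + 1 : NNReal) (Function.invFunOn π (T k)) (π '' T k) := by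
      refine LipschitzOnWith.of_dist_le_mul ?_
      rintro _ ⟨x, hx, rfl⟩ _ ⟨y, hy, rfl⟩
      rw [(hinj k).leftInvOn_invFunOn hx, (hinj k).leftInvOn_invFunOn hy, dist_eq_norm, dist_eq_norm]
      simpa using hlip k x hx y hy
    have h1 := hL.hausdorffMeasure_image_le (d := n) (by positivity)
    rw [(hinj k).leftInvOn_invFunOn.image_image] at h1
    refine h1.trans_eq ?_
    have h2 := hausdorffMeasure_pi_real (ι := Fin n)
    rw [Fintype.card_fin] at h2
    rw [h2]
    push_cast
    rw [ENNReal.rpow_natCast]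
  calc μH[(n:ℝ)] S ≤ ∑' k, μH[(n:ℝ)] (T k) := (measure_mono hST).trans (measure_iUnion_le _)
    _ ≤ ∑' k, (2 * n + 1) ^ n * volume ((fun x : Fin (n+1) → ℝ => i.removeNth x) '' T k) := 
      ENNReal.tsum_le_tsum hTk
    _ = (2 * n + 1) ^ n * ∑' k, volume ((fun x : Fin (n+1) → ℝ => i.removeNth x) '' T k) := ENNReal.tsum_mul_left
    _ ≤ _ := by
      gcongr
      set B := Icc (i.removeNth a) (fun j => (i.removeNth a) j + s) with hB
      have hBm : MeasurableSet B := measurableSet_Icc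
      have hsub : ∀ k, (fun x : Fin (n+1) → ℝ => i.removeNth x) '' T k ⊆ B := by
        rintro k _ ⟨x, hx, rfl⟩
        exact ⟨fun j => hx.1.1.1 _, fun j => hx.1.1.2 _⟩
      have e1 : ∀ k, volume ((fun x : Fin (n+1) → ℝ => i.removeNth x) '' T k) =
          ∫⁻ y in B, ((fun x : Fin (n+1) → ℝ => i.removeNth x) '' T k).indicator (fun _ => (1:ℝ≥0∞)) y := by
        intro k
        rw [lintegral_indicator (hIm k), Measure.restrict_restrict (hIm k), inter_eq_left.2 (hsub k)]
        simp
      simp_rw [e1]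
      rw [← lintegral_tsum]
      · calc _ ≤ ∫⁻ y in B, (D : ℝ≥0∞) := by
              refine lintegral_mono fun y => ?_
              exact mult_bound P hD i T hTd (fun k x hx => ⟨hx.1.2.1, hx.1.2.2.1⟩) y
          _ = D * volume B := by simp
          _ = _ := by
            rw [hB, Real.volume_Icc_pi]
            simp
      · intro k
        exact (measurable_const.indicator (hIm k)).aemeasurable

lemma zero_bound (n D : ℕ) : ∃ C : ℝ, 0 ≤ C ∧ ∀ P : MvPolynomial (Fin (n+1)) ℝ, P ≠ 0 →
    P.totalDegree ≤ D → ∀ (a : Fin (n+1) → ℝ) (s : ℝ), 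
    μH[(n:ℝ)] {x | x ∈ Icc a (fun j => a j + s) ∧ MvPolynomial.eval x P = 0} ≤
      ENNReal.ofReal C * ENNReal.ofReal s ^ n := by
  induction D with
  | zero =>
    refine ⟨0, le_rfl, fun P hP hD a s => ?_⟩
    have h := MvPolynomial.totalDegree_eq_zero_iff_eq_C.1 (Nat.le_zero.1 hD)
    have h0 : MvPolynomial.coeff 0 P ≠ 0 := by
      intro h0; rw [h0] at h; simp at h; exact hP h
    have : {x | x ∈ Icc a (fun j => a j + s) ∧ MvPolynomial.eval x P = 0} = ∅ := by
      rw [h]; ext x; simp [h0]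
    rw [this]; simp
  | succ D ih =>
    obtain ⟨C, hC, ih⟩ := ih
    refine ⟨(n+1) * ((2 * n + 1) ^ n * (D + 1)) + C, by positivity, fun P hP hD a s => ?_⟩
    rcases exists_pderiv P hP hD with ⟨c, hc, rfl⟩ | ⟨i, hi0, hiD⟩
    · simp [hc]
    · set R : Fin (n+1) → Set (Fin (n+1) → ℝ) := fun i => {x | x ∈ Icc a (fun j => a j + s) ∧ MvPolynomial.eval x P = 0 ∧
      MvPolynomial.eval x (MvPolynomial.pderiv i P) ≠ 0 ∧
      ∀ j, |MvPolynomial.eval x (MvPolynomial.pderiv j P)| ≤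
      |MvPolynomial.eval x (MvPolynomial.pderiv i P)|}
      have hsub : {x | x ∈ Icc a (fun j => a j + s) ∧ MvPolynomial.eval x P = 0} ⊆
          (⋃ i, R i) ∪ {x | x ∈ Icc a (fun j => a j + s) ∧ MvPolynomial.eval x (MvPolynomial.pderiv i P) = 0} := by
        rintro x ⟨hx, hx0⟩
        by_cases h : MvPolynomial.eval x (MvPolynomial.pderiv i P) = 0
        · exact Or.inr ⟨hx, h⟩
        · left
          obtain ⟨l, hl⟩ := Finite.exists_max (fun j => |MvPolynomial.eval x (MvPolynomial.pderiv j P)|)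
          refine mem_iUnion.2 ⟨l, hx, hx0, ?_, hl⟩
          have h1 := hl i
          have h2 : 0 < |MvPolynomial.eval x (MvPolynomial.pderiv i P)| := abs_pos.2 h
          exact abs_pos.1 (h2.trans_le h1)
      calc _ ≤ μH[(n:ℝ)] (⋃ i, R i) + μH[(n:ℝ)] {x | x ∈ Icc a (fun j => a j + s) ∧ MvPolynomial.eval x (MvPolynomial.pderiv i P) = 0} :=
            (measure_mono hsub).trans (measure_union_le _ _)
        _ ≤ ∑ i : Fin (n+1), (2 * n + 1) ^ n * (((D+1 : ℕ) : ℝ≥0∞) * ENNReal.ofReal s ^ n) + ENNReal.ofReal C * ENNReal.ofReal s ^ n := by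
            refine add_le_add ((measure_iUnion_fintype_le _ _).trans ?_) (ih _ hi0 hiD a s)
            exact Finset.sum_le_sum fun i _ => reg_bound P hD i a s
        _ = _ := by
            rw [ENNReal.ofReal_add (by positivity) hC, ENNReal.ofReal_mul (by positivity), ENNReal.ofReal_mul (by positivity),
              ENNReal.ofReal_pow (by positivity)]
            have e1 : ENNReal.ofReal ((n:ℝ)+1) = (n:ℝ≥0∞) + 1 := by
              exact_mod_cast ENNReal.ofReal_natCast (n+1)
            have e2 : ENNReal.ofReal (2 * (n:ℝ)+1) = 2 * (n:ℝ≥0∞) + 1 := by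
              exact_mod_cast ENNReal.ofReal_natCast (2*n+1)
            have e3 : ENNReal.ofReal ((D:ℝ)+1) = (D:ℝ≥0∞) + 1 := by
              exact_mod_cast ENNReal.ofReal_natCast (D+1)
            rw [e1, e2, e3]
            simp
            ring

lemma sqpos_hasDerivAt (t : ℝ) : HasDerivAt (fun u : ℝ => (max u 0)^2) (2 * max t 0) t := by
  rcases lt_trichotomy t 0 with h | h | h
  · rw [max_eq_right h.le]
    have : (fun u : ℝ => (max u 0)^2) =ᶠ[𝓝 t] fun _ => 0 := by
      filter_upwards [Iio_mem_nhds h] with u hu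
      rw [max_eq_right (le_of_lt hu)]; simp
    simpa using (hasDerivAt_const t (0:ℝ)).congr_of_eventuallyEq this
  · subst h
    rw [hasDerivAt_iff_isLittleO]
    simp only [max_self, sub_zero, mul_zero, smul_zero]
    have : (fun u : ℝ => (max u 0)^2 - 0^2) =O[𝓝 0] fun u : ℝ => u^2 := by
      refine Asymptotics.IsBigO.of_bound 1 (Filter.Eventually.of_forall fun u => ?_)
      simp only [Real.norm_eq_abs, one_mul]
      rcases le_total u 0 with h | h
      · rw [max_eq_right h]; simp; positivity
      · rw [max_eq_left h]; simp
    refine this.trans_isLittleO ?_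
    simpa using Asymptotics.isLittleO_pow_id (𝕜 := ℝ) (n := 2) (by norm_num)
  · rw [max_eq_left h.le]
    have : (fun u : ℝ => (max u 0)^2) =ᶠ[𝓝 t] fun u => u^2 := by
      filter_upwards [Ioi_mem_nhds h] with u hu
      rw [max_eq_left (le_of_lt hu)]
    simpa using (hasDerivAt_pow 2 t).congr_of_eventuallyEq this

def sp (t : ℝ) : ℝ := (max t 0)^2 * (3 - 2*t) + (max (t - 1) 0)^2 * (3 + 2*(t-1))
def spd (t : ℝ) : ℝ := (2 * max t 0) * (3 - 2*t) + (max t 0)^2 * (-2) +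
  ((2 * max (t-1) 0) * (3 + 2*(t-1)) + (max (t - 1) 0)^2 * 2)

lemma sp_hasDerivAt (t : ℝ) : HasDerivAt sp (spd t) t := by
  have h1 := (sqpos_hasDerivAt t).mul (((hasDerivAt_id' t).const_mul 2).const_sub 3)
  have h2 := ((sqpos_hasDerivAt (t-1)).comp t ((hasDerivAt_id' t).sub_const 1)).mul
    ((((hasDerivAt_id' t).sub_const 1).const_mul 2).const_add 3)
  have h3 := h1.add h2
  refine h3.congr_deriv ?_
  unfold spd
  simp

lemma sp_zero {t : ℝ} (h : t ≤ 0) : sp t = 0 := by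
  unfold sp; rw [max_eq_right h, max_eq_right (by linarith)]; simp
lemma sp_one {t : ℝ} (h : 1 ≤ t) : sp t = 1 := by
  unfold sp; rw [max_eq_left (by linarith), max_eq_left (by linarith)]; ring
lemma sp_mid {t : ℝ} (h : 0 ≤ t) (h' : t ≤ 1) : sp t = t^2*(3-2*t) := by
  unfold sp; rw [max_eq_left h, max_eq_right (by linarith)]; ring
lemma spd_zero {t : ℝ} (h : t ≤ 0) : spd t = 0 := by
  unfold spd; rw [max_eq_right h, max_eq_right (by linarith)]; simp
lemma spd_one {t : ℝ} (h : 1 ≤ t) : spd t = 0 := by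
  unfold spd; rw [max_eq_left (by linarith), max_eq_left (by linarith)]; ring
lemma spd_mid {t : ℝ} (h : 0 ≤ t) (h' : t ≤ 1) : spd t = 6*t*(1-t) := by
  unfold spd; rw [max_eq_left h, max_eq_right (by linarith)]; ring
lemma sp_bd (t : ℝ) : 0 ≤ sp t ∧ sp t ≤ 1 := by
  rcases le_total t 0 with h | h
  · rw [sp_zero h]; norm_num
  rcases le_total t 1 with h' | h'
  · rw [sp_mid h h']
    constructor
    · have : 0 ≤ 3 - 2*t := by linarith
      positivity
    · nlinarith [mul_nonneg (sq_nonneg (1-t)) (by linarith : 0 ≤ 1 + 2*t)]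
  · rw [sp_one h']; norm_num
lemma spd_bd (t : ℝ) : 0 ≤ spd t ∧ spd t ≤ 2 := by
  rcases le_total t 0 with h | h
  · rw [spd_zero h]; norm_num
  rcases le_total t 1 with h' | h'
  · rw [spd_mid h h']
    constructor
    · have : 0 ≤ 1 - t := by linarith
      positivity
    · nlinarith [sq_nonneg (t - 1/2)]
  · rw [spd_one h']; norm_num

def bp (t : ℝ) : ℝ := sp (t + 1) - sp t
def bpd (t : ℝ) : ℝ := spd (t + 1) - spd t
lemma bp_hasDerivAt (t : ℝ) : HasDerivAt bp (bpd t) t :=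
  ((sp_hasDerivAt (t+1)).comp_add_const t 1).sub (sp_hasDerivAt t)
lemma bpd_cont : Continuous bpd := by
  unfold bpd spd; fun_prop
lemma bp_contDiff : ContDiff ℝ 1 bp := by
  rw [contDiff_one_iff_deriv]
  refine ⟨fun t => (bp_hasDerivAt t).differentiableAt, ?_⟩
  have : deriv bp = bpd := funext fun t => (bp_hasDerivAt t).deriv
  rw [this]; exact bpd_cont
lemma bp_abs (t : ℝ) : |bp t| ≤ 1 := by
  unfold bp; rw [abs_le]
  constructor <;> linarith [(sp_bd t).1, (sp_bd t).2, (sp_bd (t+1)).1, (sp_bd (t+1)).2]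
lemma bpd_abs (t : ℝ) : |bpd t| ≤ 2 := by
  unfold bpd; rw [abs_le]
  constructor <;> linarith [(spd_bd t).1, (spd_bd t).2, (spd_bd (t+1)).1, (spd_bd (t+1)).2]
lemma bp_supp {t : ℝ} (h : 1 ≤ |t|) : bp t = 0 ∧ bpd t = 0 := by
  unfold bp bpd
  rcases le_abs.1 h with h | h
  · rw [sp_one h, sp_one (by linarith), spd_one h, spd_one (by linarith)]; simp
  · rw [sp_zero (by linarith), sp_zero (by linarith), spd_zero (by linarith), spd_zero (by linarith)]; simp
lemma bp_sum (N : ℕ) (t : ℝ) (h0 : 0 ≤ t) (h1 : t ≤ N) : ∑ j : Fin (N+1), bp (t - j) = 1 := by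
  rw [Fin.sum_univ_eq_sum_range (fun j => bp (t - j)) (N+1)]
  have : ∀ j ∈ Finset.range (N+1), bp (t - j) = (fun j : ℕ => sp (t + 1 - j)) j - (fun j : ℕ => sp (t + 1 - j)) (j+1) := by
    intro j _
    unfold bp
    simp only
    push_cast
    congr 2 <;> ring
  rw [Finset.sum_congr rfl this, Finset.sum_range_sub']
  push_cast
  rw [sp_one (by linarith), sp_zero (by linarith)]; simp

/-- functions agreeing on a set with a polynomial of bounded degree -/
def PolyOn {d : ℕ} (Q : Set (E d)) (D : ℕ) (h : E d → ℝ) : Prop :=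
  ∃ P : MvPolynomial (Fin d) ℝ, P.totalDegree ≤ D ∧ ∀ x ∈ Q, h x = MvPolynomial.eval (fun i => x i) P

namespace PolyOn
variable {d : ℕ} {Q : Set (E d)}
lemma mono {D D' : ℕ} {h : E d → ℝ} (H : PolyOn Q D h) (hD : D ≤ D') : PolyOn Q D' h := by
  obtain ⟨P, h1, h2⟩ := H; exact ⟨P, h1.trans hD, h2⟩
lemma const (D : ℕ) (c : ℝ) : PolyOn Q D (fun _ => c) := ⟨MvPolynomial.C c, by simp, by simp⟩
lemma coord (i : Fin d) : PolyOn Q 1 (fun x => x i) := ⟨MvPolynomial.X i, by simp, by simp⟩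
lemma add {D : ℕ} {h h' : E d → ℝ} (H : PolyOn Q D h) (H' : PolyOn Q D h') :
    PolyOn Q D (fun x => h x + h' x) := by
  obtain ⟨P, h1, h2⟩ := H; obtain ⟨P', h1', h2'⟩ := H'
  exact ⟨P + P', (MvPolynomial.totalDegree_add _ _).trans (max_le h1 h1'), fun x hx => by simp [h2 x hx, h2' x hx]⟩
lemma mul {D D' : ℕ} {h h' : E d → ℝ} (H : PolyOn Q D h) (H' : PolyOn Q D' h') :
    PolyOn Q (D + D') (fun x => h x * h' x) := by
  obtain ⟨P, h1, h2⟩ := H; obtain ⟨P', h1', h2'⟩ := H'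
  exact ⟨P * P', (MvPolynomial.totalDegree_mul _ _).trans (add_le_add h1 h1'), fun x hx => by simp [h2 x hx, h2' x hx]⟩
lemma cmul {D : ℕ} {h : E d → ℝ} (c : ℝ) (H : PolyOn Q D h) : PolyOn Q D (fun x => c * h x) :=
  ((const 0 c).mul H).mono (by simp)
lemma sub {D : ℕ} {h h' : E d → ℝ} (H : PolyOn Q D h) (H' : PolyOn Q D h') :
    PolyOn Q D (fun x => h x - h' x) := by
  have := H.add (H'.cmul (-1))
  simpa [sub_eq_add_neg] using this
lemma sum {ι : Type*} (s : Finset ι) {D : ℕ} {h : ι → E d → ℝ} (H : ∀ k ∈ s, PolyOn Q D (h k)) :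
    PolyOn Q D (fun x => ∑ k ∈ s, h k x) := by
  classical
  induction s using Finset.induction_on with
  | empty => simpa using const D 0
  | insert a s ha ih =>
    simp only [Finset.sum_insert ha]
    exact (H a (by simp)).add (ih fun k hk => H k (by simp [hk]))
lemma prod {ι : Type*} (s : Finset ι) {D : ℕ} {h : ι → E d → ℝ} (H : ∀ k ∈ s, PolyOn Q D (h k)) :
    PolyOn Q (s.card * D) (fun x => ∏ k ∈ s, h k x) := by
  classical
  induction s using Finset.induction_on with
  | empty => simpa using const 0 1
  | insert a s ha ih =>
    simp only [Finset.prod_insert ha]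
    refine ((H a (by simp)).mul (ih fun k hk => H k (by simp [hk]))).mono ?_
    rw [Finset.card_insert_of_notMem ha]; ring_nf; rfl
lemma congr {D : ℕ} {h h' : E d → ℝ} (H : PolyOn Q D h) (e : ∀ x ∈ Q, h' x = h x) : PolyOn Q D h' := by
  obtain ⟨P, h1, h2⟩ := H; exact ⟨P, h1, fun x hx => by rw [e x hx, h2 x hx]⟩
lemma det {D : ℕ} {M : E d → Matrix (Fin d) (Fin d) ℝ} (H : ∀ i j, PolyOn Q D (fun x => M x i j)) :
    PolyOn Q (d * D) (fun x => (M x).det) := by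
  simp only [Matrix.det_apply']
  refine sum _ fun σ _ => cmul _ ?_
  have := prod (Finset.univ : Finset (Fin d)) (h := fun i x => M x (σ i) i) (fun i _ => H (σ i) i)
  simpa using this
lemma max0 {i : Fin d} {a b : ℝ} (h : (∀ x ∈ Q, 0 ≤ a * x i + b) ∨ (∀ x ∈ Q, a * x i + b ≤ 0)) :
    PolyOn Q 1 (fun x => max (a * x i + b) 0) := by
  rcases h with h | h
  · exact (((coord i).cmul a).add (const 1 b)).congr fun x hx => max_eq_left (h x hx)
  · exact (const 1 0).congr fun x hx => max_eq_right (h x hx)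
end PolyOn

/-- grid cell -/
def cell {d : ℕ} (N : ℕ) (k : Fin d → ℕ) : Set (E d) :=
  {x | ∀ i, (k i : ℝ) ≤ N * x i ∧ N * x i ≤ k i + 1}

lemma cell_sign {d N : ℕ} {k : Fin d → ℕ} (i : Fin d) (c : ℤ) :
    (∀ x ∈ cell N k, 0 ≤ (N:ℝ) * x i + (c:ℝ)) ∨ (∀ x ∈ cell N k, (N:ℝ) * x i + (c:ℝ) ≤ 0) := by
  rcases le_or_gt 0 ((k i : ℤ) + c) with h | h
  · left; intro x hx
    have h' : (0:ℝ) ≤ (k i : ℝ) + c := by exact_mod_cast h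
    linarith [(hx i).1]
  · right; intro x hx
    have h' : ((k i : ℤ) + c) + 1 ≤ 0 := by omega
    have h'' : (k i : ℝ) + c + 1 ≤ 0 := by exact_mod_cast h'
    linarith [(hx i).2]

lemma sp_poly {d N : ℕ} {k : Fin d → ℕ} (i : Fin d) (c : ℤ) :
    PolyOn (cell N k) 3 (fun x => sp ((N:ℝ) * x i + (c:ℝ))) ∧
    PolyOn (cell N k) 3 (fun x => spd ((N:ℝ) * x i + (c:ℝ))) := by
  have m1 : PolyOn (cell N k) 1 (fun x => max ((N:ℝ) * x i + (c:ℝ)) 0) := PolyOn.max0 (cell_sign i c)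
  have m2 : PolyOn (cell N k) 1 (fun x => max ((N:ℝ) * x i + (c:ℝ) - 1) 0) := by
    have : PolyOn (cell N k) 1 (fun x => max ((N:ℝ) * x i + ((c - 1 : ℤ):ℝ)) 0) := PolyOn.max0 (cell_sign i (c-1))
    refine this.congr fun x _ => ?_
    push_cast
    rw [add_sub_assoc]
  have l1 : PolyOn (cell N k) 1 (fun x => (N:ℝ) * x i + (c:ℝ)) := ((PolyOn.coord i).cmul _).add (PolyOn.const _ _)
  unfold sp spd
  simp only [pow_two]
  refine ⟨((m1.mul m1).mul ((PolyOn.const 1 3).sub (l1.cmul 2))).add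
    ((m2.mul m2).mul ((PolyOn.const 1 3).add ((l1.sub (PolyOn.const 1 1)).cmul 2))), ?_⟩
  refine (((((m1.cmul 2).mul ((PolyOn.const 1 3).sub (l1.cmul 2))).mono (by norm_num)).add
    ((m1.mul m1).mul (PolyOn.const 1 (-2)))).add ?_)
  exact ((((m2.cmul 2).mul ((PolyOn.const 1 3).add ((l1.sub (PolyOn.const 1 1)).cmul 2))).mono (by norm_num)).add
    ((m2.mul m2).mul (PolyOn.const 1 2)))

lemma bp_poly {d N : ℕ} {k : Fin d → ℕ} (i : Fin d) (j : ℕ) :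
    PolyOn (cell N k) 3 (fun x => bp ((N:ℝ) * x i - j)) ∧
    PolyOn (cell N k) 3 (fun x => bpd ((N:ℝ) * x i - j)) := by
  have h0 := sp_poly (N := N) (k := k) i (-(j:ℤ))
  have h1 := sp_poly (N := N) (k := k) i (-(j:ℤ) + 1)
  unfold bp bpd
  constructor
  · refine (h1.1.sub h0.1).congr fun x _ => ?_
    push_cast; congr 2 <;> ring
  · refine (h1.2.sub h0.2).congr fun x _ => ?_
    push_cast; congr 2 <;> ring

noncomputable section
def node {d : ℕ} (N : ℕ) (k : Fin d → Fin (N+1)) : E d := WithLp.toLp 2 (fun i => ((k i : ℕ) : ℝ) / N)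
def Phi {d : ℕ} (N : ℕ) (k : Fin d → Fin (N+1)) (x : E d) : ℝ := ∏ i, bp ((N:ℝ) * x i - ((k i : ℕ):ℝ))
def PhiD {d : ℕ} (N : ℕ) (k : Fin d → Fin (N+1)) (x : E d) : E d →L[ℝ] ℝ :=
  ∑ i, (∏ j ∈ Finset.univ.erase i, bp ((N:ℝ) * x j - ((k j : ℕ):ℝ))) •
    ((bpd ((N:ℝ) * x i - ((k i : ℕ):ℝ)) * N) • (EuclideanSpace.proj i : E d →L[ℝ] ℝ))
def Lk {d : ℕ} (f : E d → E d) (N : ℕ) (k : Fin d → Fin (N+1)) (x : E d) : E d :=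
  f (node N k) + fderiv ℝ f (node N k) (x - node N k)
def Gf {d : ℕ} (f : E d → E d) (N : ℕ) (x : E d) : E d := ∑ k : Fin d → Fin (N+1), Phi N k x • Lk f N k x
def GfD {d : ℕ} (f : E d → E d) (N : ℕ) (x : E d) : E d →L[ℝ] E d :=
  ∑ k : Fin d → Fin (N+1), (Phi N k x • fderiv ℝ f (node N k) + (PhiD N k x).smulRight (Lk f N k x))
end

lemma Phi_hasFDerivAt {d : ℕ} (N : ℕ) (k : Fin d → Fin (N+1)) (x : E d) :
    HasFDerivAt (Phi N k) (PhiD N k x) x := by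
  have h : ∀ i ∈ (Finset.univ : Finset (Fin d)), HasFDerivAt (fun x : E d => bp ((N:ℝ) * x i - ((k i : ℕ):ℝ)))
      ((bpd ((N:ℝ) * x i - ((k i : ℕ):ℝ)) * N) • (EuclideanSpace.proj i : E d →L[ℝ] ℝ)) x := by
    intro i _
    have h1 : HasFDerivAt (fun x : E d => (N:ℝ) * x i - ((k i : ℕ):ℝ)) 
      ((N:ℝ) • (EuclideanSpace.proj i : E d →L[ℝ] ℝ)) x :=
      (((EuclideanSpace.proj i : E d →L[ℝ] ℝ).hasFDerivAt (x := x)).const_mul (N:ℝ)).sub_const _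
    have h2 := (bp_hasDerivAt ((N:ℝ) * x i - ((k i : ℕ):ℝ))).comp_hasFDerivAt x h1
    rw [mul_smul]; exact h2
  exact HasFDerivAt.finset_prod h

lemma Lk_hasFDerivAt {d : ℕ} (f : E d → E d) (N : ℕ) (k : Fin d → Fin (N+1)) (x : E d) :
    HasFDerivAt (Lk f N k) (fderiv ℝ f (node N k)) x := by
  have h := ((fderiv ℝ f (node N k)).hasFDerivAt (x := x - node N k)).comp x ((hasFDerivAt_id x).sub_const (node N k))
  exact h.const_add (f (node N k))

lemma Gf_hasFDerivAt {d : ℕ} (f : E d → E d) (N : ℕ) (x : E d) : HasFDerivAt (Gf f N) (GfD f N x) x := by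
  unfold Gf GfD
  refine HasFDerivAt.fun_sum fun k _ => ?_
  exact (Phi_hasFDerivAt N k x).smul (Lk_hasFDerivAt f N k x)

lemma Gf_contDiff {d : ℕ} (f : E d → E d) (N : ℕ) : ContDiff ℝ 1 (Gf f N) := by
  unfold Gf
  refine ContDiff.sum fun k _ => ContDiff.fun_smul ?_ ?_
  · unfold Phi
    refine contDiff_prod fun i _ => bp_contDiff.comp ?_
    have : ContDiff ℝ 1 (fun x : E d => x i) := (EuclideanSpace.proj i : E d →L[ℝ] ℝ).contDiff
    exact (contDiff_const.mul this).sub contDiff_const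
  · unfold Lk
    exact contDiff_const.add ((fderiv ℝ f (node N k)).contDiff.comp (contDiff_id.sub contDiff_const))

lemma Phi_poly {d N : ℕ} {c : Fin d → ℕ} (k : Fin d → Fin (N+1)) : PolyOn (cell N c) (3*d) (Phi N k) := by
  have := PolyOn.prod (Finset.univ : Finset (Fin d)) (fun i _ => (bp_poly (N := N) (k := c) i (k i)).1)
  refine this.mono ?_
  simp [mul_comm]

lemma PhiD_poly {d N : ℕ} {c : Fin d → ℕ} (k : Fin d → Fin (N+1)) (v : E d) :
    PolyOn (cell N c) (3*d) (fun x => PhiD N k x v) := by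
  unfold PhiD
  simp only [ContinuousLinearMap.sum_apply, ContinuousLinearMap.smul_apply, smul_eq_mul]
  refine PolyOn.sum _ fun i _ => ?_
  have h1 := PolyOn.prod ((Finset.univ : Finset (Fin d)).erase i) (fun i _ => (bp_poly (N := N) (k := c) i (k i)).1)
  have h2 := (bp_poly (N := N) (k := c) i (k i)).2
  refine ((h1.mul ((h2.mul (PolyOn.const 0 (N:ℝ))).mul (PolyOn.const 0 (v i)))).mono ?_)
  rw [Finset.card_erase_of_mem (Finset.mem_univ i)]
  simp
  have : 0 < d := i.pos
  omega

lemma lin_poly {d : ℕ} {Q : Set (E d)} (A : E d →L[ℝ] ℝ) : PolyOn Q 1 (fun x => A x) := by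
  have : ∀ x : E d, A x = ∑ i, A (EuclideanSpace.single i 1) * x i := by
    intro x
    conv_lhs => rw [← (EuclideanSpace.basisFun (Fin d) ℝ).sum_repr x]
    simp [mul_comm]
  refine (PolyOn.sum Finset.univ (h := fun i x => A (EuclideanSpace.single i 1) * x i) fun i _ => ?_).congr
    fun x _ => this x
  exact (PolyOn.coord i).cmul _

lemma Lk_poly {d : ℕ} {Q : Set (E d)} (f : E d → E d) (N : ℕ) (k : Fin d → Fin (N+1)) (i : Fin d) :
    PolyOn Q 1 (fun x => Lk f N k x i) := by
  have h := lin_poly (Q := Q) ((EuclideanSpace.proj i : E d →L[ℝ] ℝ).comp (fderiv ℝ f (node N k)))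
  refine (h.add (PolyOn.const 1 (f (node N k) i - fderiv ℝ f (node N k) (node N k) i))).congr fun x _ => ?_
  simp [Lk]; ring

lemma jac_apply {d m : ℕ} (f : E d → E m) (x : E d) (i : Fin m) (j : Fin d) :
  jac f x i j = fderiv ℝ f x (EuclideanSpace.single j 1) i := rfl

lemma Gf_poly {d N : ℕ} {c : Fin d → ℕ} (f : E d → E d) (i j : Fin d) :
    PolyOn (cell N c) (3*d+1) (fun x => jac (Gf f N) x i j) := by
  simp only [jac_apply, (Gf_hasFDerivAt f N _).fderiv]
  have : ∀ x : E d, GfD f N x (EuclideanSpace.single j 1) i = ∑ k : Fin d → Fin (N+1),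
    (Phi N k x * fderiv ℝ f (node N k) (EuclideanSpace.single j 1) i +
      PhiD N k x (EuclideanSpace.single j 1) * Lk f N k x i) := by
    intro x
    have e : ∀ v : E d, v i = (EuclideanSpace.proj i : E d →L[ℝ] ℝ) v := fun v => rfl
    rw [e, GfD, ContinuousLinearMap.sum_apply, map_sum]
    simp
  simp only [this]
  refine PolyOn.sum _ fun k _ => PolyOn.add ?_ ?_
  · exact ((Phi_poly k).mul (PolyOn.const 0 _)).mono (by simp)
  · exact (PhiD_poly k _).mul (Lk_poly f N k i)

lemma Gt_jac {d N : ℕ} (f : E d → E d) (t : ℝ) (x : E d) :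
    jac (fun x => Gf f N x + t • x) x = jac (Gf f N) x + t • 1 := by
  ext i j
  have h : HasFDerivAt (fun x => Gf f N x + t • x) (GfD f N x + t • ContinuousLinearMap.id ℝ (E d)) x :=
    (Gf_hasFDerivAt f N x).add ((hasFDerivAt_id x).const_smul t)
  rw [Matrix.add_apply, jac_apply, jac_apply, h.fderiv, (Gf_hasFDerivAt f N x).fderiv]
  simp [Matrix.one_apply, Pi.single_apply]

lemma Gt_poly {d N : ℕ} {c : Fin d → ℕ} (f : E d → E d) (t : ℝ) :
    PolyOn (cell N c) (d * (3*d+1)) (fun x => (jac (fun x => Gf f N x + t • x) x).det) := by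
  refine PolyOn.det fun i j => ?_
  simp only [Gt_jac]
  exact (Gf_poly f i j).add (PolyOn.const _ _)

lemma exists_shift {d : ℕ} {ι : Type*} [Finite ι] (M : ι → Matrix (Fin d) (Fin d) ℝ) (τ : ℝ) (hτ : 0 < τ) :
    ∃ t : ℝ, 0 < t ∧ t < τ ∧ ∀ k, (M k + t • (1 : Matrix (Fin d) (Fin d) ℝ)).det ≠ 0 := by
  have hfin : (⋃ k, {t : ℝ | (-M k).charpoly.IsRoot t}).Finite := by
    refine Set.finite_iUnion fun k => ?_
    exact Polynomial.finite_setOf_isRoot (Matrix.charpoly_monic _).ne_zero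
  obtain ⟨t, ht, ht'⟩ := (Set.Ioo_infinite hτ).exists_notMem_finite hfin
  refine ⟨t, ht.1, ht.2, fun k h => ht' (mem_iUnion.2 ⟨k, ?_⟩)⟩
  simp only [mem_setOf_eq, Polynomial.IsRoot.def, Matrix.eval_charpoly]
  rw [← h]; congr 1
  rw [sub_neg_eq_add, add_comm, Matrix.smul_one_eq_diagonal t]
  rfl

lemma crit_measure (n D : ℕ) : ∃ C : ℝ, 0 ≤ C ∧ ∀ N : ℕ, 1 ≤ N → ∀ h : E (n+1) → ℝ,
    (∀ c : Fin (n+1) → Fin N, PolyOn (cell N (fun i => (c i : ℕ))) D h ∧ ∃ x ∈ cell N (fun i => (c i : ℕ)), h x ≠ 0) →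
    μH[(n:ℝ)] {x | x ∈ openCube (n+1) ∧ h x = 0} ≤ ENNReal.ofReal (C * N) := by
  obtain ⟨C0, hC0, hz⟩ := zero_bound n D
  have hlip := PiLp.lipschitzWith_toLp 2 (fun _ : Fin (n+1) => ℝ)
  set K : NNReal := (Fintype.card (Fin (n+1)) : NNReal) ^ (1 / (2:ℝ≥0∞)).toReal with hK
  refine ⟨(K:ℝ)^n * C0, by positivity, fun N hN h hcell => ?_⟩
  have hN0 : (0:ℝ) < N := by exact_mod_cast hN
  have hcov : {x | x ∈ openCube (n+1) ∧ h x = 0} ⊆ ⋃ c : Fin (n+1) → Fin N,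
      {x | x ∈ cell N (fun i => (c i : ℕ)) ∧ h x = 0} := by
    rintro x ⟨hx, hx0⟩
    have hfl : ∀ i, ⌊(N:ℝ) * x i⌋₊ < N := by
      intro i
      rw [Nat.floor_lt (by have := (hx i).1; positivity)]
      have := (hx i).2
      nlinarith
    refine mem_iUnion.2 ⟨fun i => ⟨⌊(N:ℝ) * x i⌋₊, hfl i⟩, fun i => ⟨?_, ?_⟩, hx0⟩
    · exact Nat.floor_le (by have := (hx i).1; positivity)
    · exact (Nat.lt_floor_add_one _).le
  have hone : ∀ c : Fin (n+1) → Fin N, μH[(n:ℝ)] {x | x ∈ cell N (fun i => (c i : ℕ)) ∧ h x = 0} ≤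
      ENNReal.ofReal ((K:ℝ)^n * C0 * (1/N)^n) := by
    intro c
    obtain ⟨⟨P, hPD, hP⟩, x0, hx0, hx0'⟩ := hcell c
    have hP0 : P ≠ 0 := by
      rintro rfl
      rw [hP x0 hx0] at hx0'
      simp at hx0'
    have h1 := hz P hP0 hPD (fun i => ((c i : ℕ):ℝ) / N) (1/N)
    have hsub : {x | x ∈ cell N (fun i => (c i : ℕ)) ∧ h x = 0} ⊆ (WithLp.toLp 2) ''
        {x | x ∈ Icc (fun i => ((c i : ℕ):ℝ) / N) (fun j => ((c j : ℕ):ℝ) / N + 1/N) ∧ MvPolynomial.eval x P = 0} := by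
      rintro x ⟨hx, hx0⟩
      refine ⟨fun i => x i, ⟨⟨fun i => ?_, fun i => ?_⟩, ?_⟩, rfl⟩
      · simp only
        rw [div_le_iff₀ hN0]; linarith [(hx i).1]
      · simp only
        rw [← add_div, le_div_iff₀ hN0]; linarith [(hx i).2]
      · rw [← hP x hx]; exact hx0
    refine (measure_mono hsub).trans ((hlip.hausdorffMeasure_image_le (d := n) (by positivity) _).trans ?_)
    refine (mul_le_mul_right h1 _).trans_eq ?_
    rw [ENNReal.ofReal_mul (by positivity), ENNReal.ofReal_mul (by positivity), ENNReal.ofReal_pow (by positivity),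
      ENNReal.ofReal_pow (by positivity), ENNReal.rpow_natCast, ENNReal.ofReal_coe_nnreal, mul_assoc]
  calc _ ≤ ∑ c : Fin (n+1) → Fin N, μH[(n:ℝ)] {x | x ∈ cell N (fun i => (c i : ℕ)) ∧ h x = 0} :=
        (measure_mono hcov).trans (measure_iUnion_fintype_le _ _)
    _ ≤ ∑ c : Fin (n+1) → Fin N, ENNReal.ofReal ((K:ℝ)^n * C0 * (1/N)^n) := Finset.sum_le_sum fun c _ => hone c
    _ = ENNReal.ofReal ((K:ℝ)^n * C0 * N) := by
      rw [Finset.sum_const, nsmul_eq_mul, ← ENNReal.ofReal_natCast, ← ENNReal.ofReal_mul (by positivity)]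
      congr 1
      simp
      field_simp
      ring

lemma active_card {d N : ℕ} (x : E d) :
    (Finset.univ.filter fun k : Fin d → Fin (N+1) => ∀ i, |(N:ℝ) * x i - ((k i : ℕ):ℝ)| < 1).card ≤ 2 ^ d := by
  have h1 : ∀ t : ℝ, (Finset.univ.filter fun j : Fin (N+1) => |t - ((j : ℕ):ℝ)| < 1).card ≤ 2 := by
    intro t
    have h2 : (({⌊t⌋, ⌊t⌋ + 1} : Finset ℤ)).card ≤ 2 := Finset.card_le_two
    refine le_trans (Finset.card_le_card_of_injOn (fun j : Fin (N+1) => ((j:ℕ):ℤ)) ?_ ?_) h2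
    · intro j hj
      have hj' := (Finset.mem_filter.1 hj).2
      rw [abs_lt] at hj'
      have e1 : ((j:ℕ):ℤ) < ⌊t⌋ + 2 := by
        have : (((j:ℕ):ℤ):ℝ) < ((⌊t⌋ + 2 : ℤ):ℝ) := by
          push_cast; linarith [Int.lt_floor_add_one t]
        exact_mod_cast this
      have e2 : ⌊t⌋ - 1 < ((j:ℕ):ℤ) := by
        have : ((⌊t⌋ - 1 : ℤ):ℝ) < (((j:ℕ):ℤ):ℝ) := by
          push_cast; linarith [Int.floor_le t]
        exact_mod_cast this
      simp only [Finset.coe_insert, Finset.coe_singleton, mem_insert_iff, mem_singleton_iff]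
      omega
    · intro a _ b _ hab
      simp only [Nat.cast_inj] at hab
      exact Fin.ext hab
  have h3 : (Finset.univ.filter fun k : Fin d → Fin (N+1) => ∀ i, |(N:ℝ) * x i - ((k i : ℕ):ℝ)| < 1) =
      Fintype.piFinset (fun i => Finset.univ.filter fun j : Fin (N+1) => |(N:ℝ) * x i - ((j : ℕ):ℝ)| < 1) := by
    ext k; simp [Fintype.mem_piFinset]
  rw [h3, Fintype.card_piFinset]
  refine (Finset.prod_le_prod' fun i _ => h1 _).trans ?_
  simp

lemma active_sum {d N : ℕ} {V : Type*} [NormedAddCommGroup V] (x : E d) (F : (Fin d → Fin (N+1)) → V) (B : ℝ) (hB : 0 ≤ B)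
    (h0 : ∀ k, ¬ (∀ i, |(N:ℝ) * x i - ((k i : ℕ):ℝ)| < 1) → F k = 0)
    (h1 : ∀ k, (∀ i, |(N:ℝ) * x i - ((k i : ℕ):ℝ)| < 1) → ‖F k‖ ≤ B) : ‖∑ k, F k‖ ≤ 2 ^ d * B := by
  classical
  rw [← Finset.sum_filter_of_ne (s := Finset.univ) (p := fun k => ∀ i, |(N:ℝ) * x i - ((k i : ℕ):ℝ)| < 1)
    (fun k _ hk => by by_contra h; exact hk (h0 k h))]
  refine (norm_sum_le_of_le _ (fun k hk => h1 k (Finset.mem_filter.1 hk).2)).trans ?_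
  rw [Finset.sum_const, nsmul_eq_mul]
  gcongr
  exact_mod_cast active_card x

lemma Phi_inactive {d N : ℕ} {x : E d} {k : Fin d → Fin (N+1)} (h : ¬ (∀ i, |(N:ℝ) * x i - ((k i : ℕ):ℝ)| < 1)) :
    Phi N k x = 0 ∧ PhiD N k x = 0 := by
  push Not at h
  obtain ⟨i, hi⟩ := h
  have := bp_supp hi
  constructor
  · exact Finset.prod_eq_zero (Finset.mem_univ i) this.1
  · refine Finset.sum_eq_zero fun j _ => ?_
    by_cases hij : j = i
    · subst hij; rw [this.2]; simp
    · rw [Finset.prod_eq_zero (Finset.mem_erase.2 ⟨Ne.symm hij, Finset.mem_univ i⟩) this.1, zero_smul]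

lemma proj_norm_le {d : ℕ} (i : Fin d) : ‖(EuclideanSpace.proj i : E d →L[ℝ] ℝ)‖ ≤ 1 :=
  ContinuousLinearMap.opNorm_le_bound _ zero_le_one fun x => by
    rw [one_mul]; exact PiLp.norm_apply_le x i

lemma Phi_abs {d N : ℕ} (x : E d) (k : Fin d → Fin (N+1)) : |Phi N k x| ≤ 1 := by
  unfold Phi; rw [Finset.abs_prod]
  exact Finset.prod_le_one (fun _ _ => abs_nonneg _) fun i _ => bp_abs _

lemma PhiD_norm {d N : ℕ} (x : E d) (k : Fin d → Fin (N+1)) : ‖PhiD N k x‖ ≤ d * (2 * N) := by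
  unfold PhiD
  refine (norm_sum_le_of_le (f := _) (n := fun _ => (2 * N : ℝ)) _ (fun i _ => ?_)).trans (by simp)
  rw [norm_smul, norm_smul, Real.norm_eq_abs, Real.norm_eq_abs, Finset.abs_prod, abs_mul, Nat.abs_cast]
  have h1 : ∏ j ∈ Finset.univ.erase i, |bp ((N:ℝ) * x j - ((k j : ℕ):ℝ))| ≤ 1 :=
    Finset.prod_le_one (fun _ _ => abs_nonneg _) fun i _ => bp_abs _
  have h2 := bpd_abs ((N:ℝ) * x i - ((k i : ℕ):ℝ))
  have h3 := proj_norm_le i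
  have h4 : |bpd ((N:ℝ) * x i - ((k i : ℕ):ℝ))| * N * ‖(EuclideanSpace.proj i : E d →L[ℝ] ℝ)‖ ≤ 2 * N * 1 := by
    gcongr
  calc _ ≤ 1 * (2 * N * 1 : ℝ) := by gcongr
    _ = _ := by ring

lemma Phi_sum {d N : ℕ} {x : E d} (hx : x ∈ unitCube d) : ∑ k : Fin d → Fin (N+1), Phi N k x = 1 := by
  unfold Phi
  have h := Finset.prod_univ_sum (fun _ : Fin d => (Finset.univ : Finset (Fin (N+1)))) (fun i j => bp ((N:ℝ) * x i - ((j:ℕ):ℝ)))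
  rw [Fintype.piFinset_univ] at h
  rw [← h]
  refine Finset.prod_eq_one fun i _ => bp_sum N _ ?_ ?_
  · have := (hx i).1; positivity
  · have := (hx i).2
    have : (N:ℝ) * x i ≤ N * 1 := by gcongr
    simpa using this

lemma node_mem {d N : ℕ} (hN : 1 ≤ N) (k : Fin d → Fin (N+1)) : node N k ∈ unitCube d := by
  intro i
  have hN0 : (0:ℝ) < N := by exact_mod_cast hN
  have h1 : ((k i : ℕ):ℝ) ≤ N := by exact_mod_cast Nat.lt_succ_iff.1 (k i).2
  simp only [node]
  exact ⟨by positivity, by rw [div_le_one hN0]; exact h1⟩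

lemma node_dist {d N : ℕ} (hN : 1 ≤ N) {k : Fin d → Fin (N+1)} {x : E d}
    (h : ∀ i, |(N:ℝ) * x i - ((k i : ℕ):ℝ)| < 1) : ‖x - node N k‖ ≤ d / N := by
  have hN0 : (0:ℝ) < N := by exact_mod_cast hN
  have e : x - node N k = ∑ i, (x - node N k) i • EuclideanSpace.single i (1:ℝ) := by
    conv_lhs => rw [← (EuclideanSpace.basisFun (Fin d) ℝ).sum_repr (x - node N k)]
    simp
  rw [e]
  refine (norm_sum_le_of_le (n := fun _ => (1 / N : ℝ)) _ (fun i _ => ?_)).trans (by simp; rfl)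
  rw [norm_smul]
  simp [node]
  have : x i - ((k i : ℕ):ℝ) / N = ((N:ℝ) * x i - ((k i : ℕ):ℝ)) / N := by field_simp
  rw [this, abs_div, Nat.abs_cast, ← one_div]
  gcongr
  exact (h i).le

lemma cube_convex (d : ℕ) : Convex ℝ (unitCube d) := by
  intro x hx y hy a b ha hb hab i
  exact (convex_Icc (0:ℝ) 1) (hx i) (hy i) ha hb hab

lemma taylor {d : ℕ} {α H : ℝ} (hα : 0 < α) (hH : 0 ≤ H) (f : E d → E d) (hf : ContDiff ℝ 1 f)
    (hh : ∀ x ∈ unitCube d, ∀ y ∈ unitCube d, ‖fderiv ℝ f x - fderiv ℝ f y‖ ≤ H * ‖x - y‖ ^ α)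
    {x y : E d} (hx : x ∈ unitCube d) (hy : y ∈ unitCube d) {ρ : ℝ} (hρ : ‖x - y‖ ≤ ρ) :
    ‖f y + fderiv ℝ f y (x - y) - f x‖ ≤ H * ρ ^ α * ρ := by
  have hρ0 : 0 ≤ ρ := (norm_nonneg _).trans hρ
  have hconv : Convex ℝ (unitCube d ∩ Metric.closedBall y ρ) := (cube_convex d).inter (convex_closedBall y ρ)
  have h := hconv.norm_image_sub_le_of_norm_hasFDerivWithin_le' (f := f) (f' := fderiv ℝ f) (φ := fderiv ℝ f y) (C := H * ρ ^ α)
    (x := y) (y := x)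
    (fun z _ => ((hf.differentiable (by norm_num)) z).hasFDerivAt.hasFDerivWithinAt)
    (fun z hz => (hh z hz.1 y hy).trans (by
      have : ‖z - y‖ ≤ ρ := by simpa [dist_eq_norm] using hz.2
      gcongr))
    ⟨hy, by simpa using hρ0⟩ ⟨hx, by simpa [dist_eq_norm] using hρ⟩
  rw [← norm_neg]
  have e : -(f y + fderiv ℝ f y (x - y) - f x) = f x - f y - fderiv ℝ f y (x - y) := by abel
  rw [e]
  refine h.trans ?_
  gcongr

lemma cube_closure (d : ℕ) : unitCube d ⊆ closure (openCube d) := by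
  intro x hx
  have ht : Filter.Tendsto (fun s : ℝ => x + s • (WithLp.toLp 2 (fun _ => (1/2:ℝ)) - x)) (𝓝[>] 0) (𝓝 x) := by
    have : ContinuousAt (fun s : ℝ => x + s • (WithLp.toLp 2 (fun _ => (1/2:ℝ)) - x)) 0 := by fun_prop
    have h2 := this.tendsto
    simp only [zero_smul, add_zero] at h2
    exact h2.mono_left nhdsWithin_le_nhds
  refine mem_closure_of_tendsto ht ?_
  filter_upwards [Ioo_mem_nhdsGT (zero_lt_one' ℝ)] with s hs i
  have h1 := (hx i).1
  have h2 := (hx i).2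
  simp
  constructor <;> nlinarith [hs.1, hs.2, mul_nonneg h1 (sub_nonneg.2 hs.2.le), mul_nonneg (sub_nonneg.2 h2) (sub_nonneg.2 hs.2.le)]

lemma Gf_close {d : ℕ} (hd : 1 ≤ d) {α H : ℝ} (hα : 0 < α) (hα1 : α ≤ 1) (hH : 0 ≤ H) (f : E d → E d) (hf : ContDiff ℝ 1 f)
    (hh : ∀ x ∈ unitCube d, ∀ y ∈ unitCube d, ‖fderiv ℝ f x - fderiv ℝ f y‖ ≤ H * ‖x - y‖ ^ α)
    {N : ℕ} (hN : 1 ≤ N) {x : E d} (hx : x ∈ unitCube d) :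
    ‖Gf f N x - f x‖ ≤ 2 ^ d * (H * (d * ((N:ℝ)⁻¹) ^ α) * (1 + 2 * d ^ 2)) ∧
    ‖GfD f N x - fderiv ℝ f x‖ ≤ 2 ^ d * (H * (d * ((N:ℝ)⁻¹) ^ α) * (1 + 2 * d ^ 2)) := by
  have hN0 : (0:ℝ) < N := by exact_mod_cast hN
  have hN1 : (1:ℝ) ≤ N := by exact_mod_cast hN
  have hd1 : (1:ℝ) ≤ d := by exact_mod_cast hd
  have hρ : H * ((d:ℝ) / N) ^ α ≤ H * (d * ((N:ℝ)⁻¹) ^ α) := by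
    rw [div_eq_mul_inv, Real.mul_rpow (by positivity) (by positivity)]
    gcongr
    calc (d:ℝ) ^ α ≤ (d:ℝ) ^ (1:ℝ) := Real.rpow_le_rpow_of_exponent_le hd1 hα1
      _ = d := Real.rpow_one _
  set R := H * (d * ((N:ℝ)⁻¹) ^ α) with hR
  have hR0 : 0 ≤ R := by positivity
  have hL : ∀ x ∈ unitCube d, ∀ k : Fin d → Fin (N+1), (∀ i, |(N:ℝ) * x i - ((k i : ℕ):ℝ)| < 1) →
      ‖Lk f N k x - f x‖ ≤ R * (d / N) := by
    intro x hx k hk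
    refine (taylor hα hH f hf hh hx (node_mem hN k) (node_dist hN hk)).trans ?_
    gcongr
  have hDd : ∀ x ∈ unitCube d, ∀ k : Fin d → Fin (N+1), (∀ i, |(N:ℝ) * x i - ((k i : ℕ):ℝ)| < 1) →
      ‖fderiv ℝ f (node N k) - fderiv ℝ f x‖ ≤ R := by
    intro x hx k hk
    refine (hh _ (node_mem hN k) x hx).trans (le_trans ?_ hρ)
    rw [norm_sub_rev]
    gcongr
    exact node_dist hN hk
  have hdiff : ∀ x ∈ unitCube d, Gf f N x - f x = ∑ k : Fin d → Fin (N+1), Phi N k x • (Lk f N k x - f x) := by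
    intro x hx
    simp only [smul_sub, Finset.sum_sub_distrib, ← Finset.sum_smul, Phi_sum hx, one_smul]
    rfl
  constructor
  · rw [hdiff x hx]
    refine active_sum x _ _ (by positivity) (fun k hk => by rw [(Phi_inactive hk).1, zero_smul]) fun k hk => ?_
    rw [norm_smul]
    calc _ ≤ 1 * (R * (d / N)) := by
          gcongr
          · exact Phi_abs x k
          · exact hL x hx k hk
      _ ≤ R * (1 + 2 * d^2) := by
        rw [one_mul]
        gcongr
        have : (d:ℝ) / N ≤ d := div_le_self (by positivity) hN1
        nlinarith
  · have hopen : ∀ x ∈ openCube d, ‖GfD f N x - fderiv ℝ f x‖ ≤ 2 ^ d * (R * (1 + 2 * d ^ 2)) := by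
      intro x hxo
      have hsub : openCube d ⊆ unitCube d := fun x hx i => ⟨(hx i).1.le, (hx i).2.le⟩
      have hop : IsOpen (openCube d) := by
        have : openCube d = ⋂ i, {x : E d | x i ∈ Ioo (0:ℝ) 1} := by ext; simp [openCube]
        rw [this]
        exact isOpen_iInter_of_finite fun i => isOpen_Ioo.preimage (by fun_prop)
      have hx := hsub hxo
      have hfd : HasFDerivAt f (fderiv ℝ f x) x := ((hf.differentiable (by norm_num)) x).hasFDerivAt
      have h1 : HasFDerivAt (fun x => Gf f N x - f x) (GfD f N x - fderiv ℝ f x) x := (Gf_hasFDerivAt f N x).sub hfd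
      have h2 : HasFDerivAt (fun x => ∑ k : Fin d → Fin (N+1), Phi N k x • (Lk f N k x - f x))
        (∑ k : Fin d → Fin (N+1), (Phi N k x • (fderiv ℝ f (node N k) - fderiv ℝ f x) + (PhiD N k x).smulRight (Lk f N k x - f x))) x := by
        refine HasFDerivAt.fun_sum fun k _ => ?_
        exact (Phi_hasFDerivAt N k x).smul ((Lk_hasFDerivAt f N k x).sub hfd)
      have h3 : (fun x => Gf f N x - f x) =ᶠ[𝓝 x] (fun x => ∑ k : Fin d → Fin (N+1), Phi N k x • (Lk f N k x - f x)) := by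
        filter_upwards [hop.mem_nhds hxo] with z hz using hdiff z (hsub hz)
      rw [h1.unique (h2.congr_of_eventuallyEq h3)]
      refine active_sum x _ _ (by positivity) (fun k hk => by rw [(Phi_inactive hk).1, (Phi_inactive hk).2]; ext; simp) fun k hk => ?_
      refine (norm_add_le _ _).trans ?_
      rw [norm_smul, ContinuousLinearMap.norm_smulRight_apply]
      calc _ ≤ 1 * R + d * (2 * N) * (R * (d / N)) := by
            gcongr
            · exact Phi_abs x k
            · exact hDd x hx k hk
            · exact PhiD_norm x k
            · exact hL x hx k hk
        _ = R * (1 + 2 * d^2) := by field_simp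
    have hcl : IsClosed {x : E d | ‖GfD f N x - fderiv ℝ f x‖ ≤ 2 ^ d * (R * (1 + 2 * d ^ 2))} := by
      refine isClosed_le (Continuous.norm (Continuous.sub ?_ (hf.continuous_fderiv (by norm_num)))) continuous_const
      have : GfD f N = fderiv ℝ (Gf f N) := funext fun x => (Gf_hasFDerivAt f N x).fderiv.symm
      rw [this]
      exact (Gf_contDiff f N).continuous_fderiv (by norm_num)
    exact closure_minimal hopen hcl (cube_closure d hx)

noncomputable section
def matL {d m : ℕ} (A : E d →L[ℝ] E m) : Matrix (Fin m) (Fin d) ℝ :=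
  Matrix.of fun i j => A (EuclideanSpace.single j 1) i
end

lemma matL_comp {d m p : ℕ} (A : E d →L[ℝ] E m) (B : E p →L[ℝ] E d) : matL (A.comp B) = matL A * matL B := by
  ext i j
  rw [Matrix.mul_apply]
  simp only [matL, Matrix.of_apply, ContinuousLinearMap.comp_apply]
  set y := B (EuclideanSpace.single j 1)
  have e : A y = ∑ l, y l • A (EuclideanSpace.single l 1) := by
    conv_lhs => rw [← (EuclideanSpace.basisFun (Fin d) ℝ).sum_repr y]
    simp
  have e' : ∀ v : E m, v i = (EuclideanSpace.proj i : E m →L[ℝ] ℝ) v := fun v => rfl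
  rw [e, e', map_sum]
  simp [mul_comm]

lemma matL_id {m : ℕ} : matL (ContinuousLinearMap.id ℝ (E m)) = 1 := by
  ext i j
  simp [matL, Matrix.one_apply, Pi.single_apply]

lemma exists_iso {m d : ℕ} (h : m ≤ d) : ∃ ι : E m →ₗᵢ[ℝ] E d, ∃ P : E d →L[ℝ] E m, ‖P‖ ≤ 1 ∧
    P.comp ι.toContinuousLinearMap = ContinuousLinearMap.id ℝ (E m) := by
  have hv : Orthonormal ℝ (fun i : Fin m => EuclideanSpace.basisFun (Fin d) ℝ (Fin.castLE h i)) :=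
    (EuclideanSpace.basisFun (Fin d) ℝ).orthonormal.comp _ (Fin.castLE_injective h)
  set b := (EuclideanSpace.basisFun (Fin m) ℝ) with hb
  set L : E m →ₗ[ℝ] E d := b.toBasis.constr ℝ (fun i : Fin m => EuclideanSpace.basisFun (Fin d) ℝ (Fin.castLE h i)) with hL
  have hLb : L ∘ b.toBasis = (fun i : Fin m => EuclideanSpace.basisFun (Fin d) ℝ (Fin.castLE h i)) := by
    funext i
    simp only [Function.comp_apply, hL, Module.Basis.constr_basis]
  let ι : E m →ₗᵢ[ℝ] E d := L.isometryOfOrthonormal (v := b.toBasis) (by simpa using b.orthonormal) (by rw [hLb]; exact hv)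
  refine ⟨ι, ContinuousLinearMap.adjoint ι.toContinuousLinearMap, ?_, ?_⟩
  · rw [LinearIsometryEquiv.norm_map]
    exact ι.norm_toContinuousLinearMap_le
  · ext1 x
    refine ext_inner_right ℝ fun y => ?_
    rw [ContinuousLinearMap.comp_apply, ContinuousLinearMap.adjoint_inner_left]
    simp

lemma jac_shift {d : ℕ} (f : E d → E d) (t : ℝ) (x : E d) (hf : DifferentiableAt ℝ f x) :
    HasFDerivAt (fun x => f x + t • x) (fderiv ℝ f x + t • ContinuousLinearMap.id ℝ (E d)) x ∧ 
    jac (fun x => f x + t • x) x = jac f x + t • 1 := by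
  have h : HasFDerivAt (fun x => f x + t • x) (fderiv ℝ f x + t • ContinuousLinearMap.id ℝ (E d)) x :=
    hf.hasFDerivAt.add ((hasFDerivAt_id x).const_smul t)
  refine ⟨h, ?_⟩
  ext i j
  rw [Matrix.add_apply, jac_apply, jac_apply, h.fderiv]
  simp [Matrix.one_apply, Pi.single_apply]

lemma cube_norm {d : ℕ} {x : E d} (hx : x ∈ unitCube d) : ‖x‖ ≤ d := by
  conv_lhs => rw [← (EuclideanSpace.basisFun (Fin d) ℝ).sum_repr x]
  refine (norm_sum_le_of_le (n := fun _ => (1 : ℝ)) _ (fun i _ => ?_)).trans (by simp)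
  rw [norm_smul]
  simp
  exact abs_le.2 ⟨by linarith [(hx i).1], (hx i).2⟩

/-- adding a small multiple of the identity keeps us close -/
lemma shift_close {d : ℕ} (hd : 1 ≤ d) (f g : E d → E d) (hg : ContDiff ℝ 1 g) {t ε : ℝ} (ht0 : 0 < t) (ht : t < ε / (2 * d))
    {x : E d} (hx : x ∈ unitCube d) (h1 : ‖g x - f x‖ ≤ ε / 2) (h2 : ‖fderiv ℝ g x - fderiv ℝ f x‖ ≤ ε / 2) :
    ‖(g x + t • x) - f x‖ ≤ ε ∧ ‖fderiv ℝ (fun x => g x + t • x) x - fderiv ℝ f x‖ ≤ ε := by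
  have hd1 : (1:ℝ) ≤ d := by exact_mod_cast hd
  rw [lt_div_iff₀ (by positivity)] at ht
  constructor
  · have e : (g x + t • x) - f x = (g x - f x) + t • x := by abel
    rw [e]
    refine (norm_add_le _ _).trans ?_
    have : ‖t • x‖ ≤ t * d := by
      rw [norm_smul, Real.norm_eq_abs, abs_of_pos ht0]
      gcongr; exact cube_norm hx
    linarith
  · rw [(jac_shift g t x (hg.differentiable (by norm_num) x)).1.fderiv]
    have e : fderiv ℝ g x + t • ContinuousLinearMap.id ℝ (E d) - fderiv ℝ f x =
      (fderiv ℝ g x - fderiv ℝ f x) + t • ContinuousLinearMap.id ℝ (E d) := by abel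
    rw [e]
    refine (norm_add_le _ _).trans ?_
    have : ‖t • ContinuousLinearMap.id ℝ (E d)‖ ≤ t * 1 := by
      rw [norm_smul, Real.norm_eq_abs, abs_of_pos ht0]
      gcongr; exact ContinuousLinearMap.norm_id_le
    nlinarith

lemma square_case (n : ℕ) (α : ℝ) (hα : 0 < α) (hα1 : α ≤ 1) : ∃ C : ℝ, 0 < C ∧
    ∀ f : E (n+1) → E (n+1), ContDiff ℝ 1 f → ∀ H : ℝ, 0 ≤ H →
      (∀ x ∈ unitCube (n+1), ∀ y ∈ unitCube (n+1), ‖fderiv ℝ f x - fderiv ℝ f y‖ ≤ H * ‖x - y‖ ^ α) →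
      ∃ ε₀ : ℝ, 0 < ε₀ ∧ ∀ ε : ℝ, 0 < ε → ε ≤ ε₀ → ∃ g : E (n+1) → E (n+1), ContDiff ℝ 1 g ∧
        (∀ x ∈ unitCube (n+1), ‖g x - f x‖ ≤ ε ∧ ‖fderiv ℝ g x - fderiv ℝ f x‖ ≤ ε) ∧
        μH[(n:ℝ)] {x | x ∈ openCube (n+1) ∧ (jac g x).det = 0} ≤ ENNReal.ofReal (C * (H / ε) ^ (1/α)) := by
  obtain ⟨C1, hC1, hmeas⟩ := crit_measure n ((n+1) * (3*(n+1)+1))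
  set K : ℝ := 2 ^ (n+1) * (((n+1 : ℕ):ℝ) * (1 + 2 * ((n+1 : ℕ):ℝ) ^ 2)) with hK
  have hK0 : 0 < K := by positivity
  have hd1 : 1 ≤ n + 1 := by omega
  have hid : ContDiff ℝ 1 (fun x : E (n+1) => x) := contDiff_id
  refine ⟨C1 * 2 * (2 * K) ^ (1/α) + 1, by positivity, fun f hf H hH hh => ?_⟩
  rcases hH.eq_or_lt with rfl | hHpos
  · refine ⟨1, one_pos, fun ε hε _ => ?_⟩
    obtain ⟨t, ht0, ht, hdet⟩ := exists_shift (fun _ : Unit => jac f 0) (ε / (2 * ((n+1 : ℕ):ℝ))) (by positivity)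
    refine ⟨fun x => f x + t • x, hf.add (hid.const_smul t), fun x hx => ?_, ?_⟩
    · exact shift_close hd1 f f hf ht0 ht hx (by simp; positivity) (by simp; positivity)
    · have : {x | x ∈ openCube (n+1) ∧ (jac (fun x => f x + t • x) x).det = 0} = ∅ := by
        ext x
        simp only [mem_setOf_eq, mem_empty_iff_false, iff_false, not_and]
        intro hx
        rw [(jac_shift f t x (hf.differentiable (by norm_num) x)).2]
        have h0 : (0 : E (n+1)) ∈ unitCube (n+1) := fun i => by simp
        have h1 := hh x (fun i => ⟨(hx i).1.le, (hx i).2.le⟩) 0 h0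
        rw [zero_mul, norm_le_zero_iff, sub_eq_zero] at h1
        have h2 : jac f x = jac f 0 := by unfold jac; rw [h1]
        rw [h2]
        exact hdet ()
      rw [this]; simp
  · refine ⟨2 * K * H, by positivity, fun ε hε hε0 => ?_⟩
    set ν : ℝ := (2 * K * H / ε) ^ (1/α) with hν
    have hq : 1 ≤ 2 * K * H / ε := by rw [le_div_iff₀ hε]; linarith
    have hν1 : 1 ≤ ν := Real.one_le_rpow hq (by positivity)
    set N : ℕ := ⌈ν⌉₊ with hNdef
    have hνN : ν ≤ N := Nat.le_ceil ν
    have hN2 : (N:ℝ) ≤ 2 * ν := by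
      have := Nat.ceil_lt_add_one (a := ν) (by linarith)
      linarith
    have hN : 1 ≤ N := by
      have : (1:ℝ) ≤ N := hν1.trans hνN
      exact_mod_cast this
    have hN0 : (0:ℝ) < N := by exact_mod_cast hN
    have hbound : 2 ^ (n+1) * (H * (((n+1 : ℕ):ℝ) * ((N:ℝ)⁻¹) ^ α) * (1 + 2 * ((n+1 : ℕ):ℝ) ^ 2)) ≤ ε / 2 := by
      have h1 : 2 * K * H / ε ≤ (N:ℝ) ^ α := by
        calc 2 * K * H / ε = ν ^ α := by
              rw [hν, ← Real.rpow_mul (by positivity), one_div, inv_mul_cancel₀ hα.ne', Real.rpow_one]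
          _ ≤ _ := by gcongr
      have h2 : 2 ^ (n+1) * (H * (((n+1 : ℕ):ℝ) * ((N:ℝ)⁻¹) ^ α) * (1 + 2 * ((n+1 : ℕ):ℝ) ^ 2)) = K * H / (N:ℝ) ^ α := by
        rw [Real.inv_rpow hN0.le, hK]; field_simp
      rw [h2, div_le_iff₀ (by positivity)]
      rw [div_le_iff₀ hε] at h1
      linarith
    have hcm : ∀ c : Fin (n+1) → Fin N, (WithLp.toLp 2 (fun i => ((c i : ℕ):ℝ) / N) : E (n+1)) ∈ cell N (fun i => (c i : ℕ)) := by
      intro c i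
      have : (N:ℝ) * (((c i : ℕ):ℝ) / N) = ((c i : ℕ):ℝ) := by field_simp
      simp only [this]
      constructor <;> linarith
    obtain ⟨t, ht0, ht, hdet⟩ := exists_shift (fun c : Fin (n+1) → Fin N => 
      jac (Gf f N) (WithLp.toLp 2 (fun i => ((c i : ℕ):ℝ) / N))) (ε / (2 * ((n+1 : ℕ):ℝ))) (by positivity)
    refine ⟨fun x => Gf f N x + t • x, (Gf_contDiff f N).add (hid.const_smul t), fun x hx => ?_, ?_⟩
    · have hc := Gf_close hd1 hα hα1 hH f hf hh hN hx
      refine shift_close hd1 f (Gf f N) (Gf_contDiff f N) ht0 ht hx (hc.1.trans hbound) ?_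
      rw [(Gf_hasFDerivAt f N x).fderiv]
      exact hc.2.trans hbound
    · refine (hmeas N hN (fun x => (jac (fun x => Gf f N x + t • x) x).det) (fun c => ⟨Gt_poly f t, _, hcm c, ?_⟩)).trans ?_
      · simp only [Gt_jac]
        exact hdet c
      · refine ENNReal.ofReal_le_ofReal ?_
        have e : ν = (2 * K) ^ (1/α) * (H / ε) ^ (1/α) := by
          rw [hν, mul_div_assoc, Real.mul_rpow (by positivity) (by positivity)]
        have h0 : 0 ≤ (H / ε) ^ (1/α) := by positivity
        calc C1 * N ≤ C1 * (2 * ν) := by gcongr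
          _ = C1 * 2 * (2 * K) ^ (1/α) * (H / ε) ^ (1/α) := by rw [e]; ring
          _ ≤ _ := by nlinarith

/-- upper bound for `N_f(ε)` for `C^{1,α}` functions. -/
theorem statement1 (d : ℕ) (hd : 1 ≤ d) (α : ℝ) (hα : α ∈ Set.Ioc (0:ℝ) 1) :
    ∃ C : ℝ, 0 < C ∧
      ∀ m : ℕ, 1 ≤ m → m ≤ d →
        ∀ f : E d → E m, ContDiff ℝ 1 f →
          ∀ H : ℝ, 0 ≤ H →
            (∀ x ∈ unitCube d, ∀ y ∈ unitCube d,
              ‖fderiv ℝ f x - fderiv ℝ f y‖ ≤ H * ‖x - y‖ ^ α) →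
            ∃ ε₀ : ℝ, 0 < ε₀ ∧ ∀ ε : ℝ, 0 < ε → ε ≤ ε₀ →
              Nf f ε ≤ ENNReal.ofReal (C * (H / ε) ^ (1/α)) := by
  obtain ⟨n, rfl⟩ : ∃ n, d = n + 1 := ⟨d - 1, by omega⟩
  obtain ⟨C, hC, hsq⟩ := square_case n α hα.1 hα.2
  refine ⟨C, hC, fun m hm hmd f hf H hH hh => ?_⟩
  obtain ⟨ι, P, hP, hPι⟩ := exists_iso hmd
  have hfd : ∀ x, fderiv ℝ (fun x => ι (f x)) x = ι.toContinuousLinearMap.comp (fderiv ℝ f x) := by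
    intro x
    exact (ι.toContinuousLinearMap.hasFDerivAt.comp x (hf.differentiable (by norm_num) x).hasFDerivAt).fderiv
  have hPι' : ∀ y, P (ι y) = y := fun y => by
    have := congrArg (fun A : E m →L[ℝ] E m => A y) hPι
    simpa using this
  obtain ⟨ε₀, hε₀, hmain⟩ := hsq (fun x => ι (f x)) (ι.contDiff.comp hf) H hH (fun x hx y hy => by
    rw [hfd, hfd, ← ContinuousLinearMap.comp_sub, LinearIsometry.norm_toContinuousLinearMap_comp]
    exact hh x hx y hy)
  refine ⟨ε₀, hε₀, fun ε hε hle => ?_⟩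
  obtain ⟨g, hg, hclose, hmeas⟩ := hmain ε hε hle
  have hgd : ∀ x, fderiv ℝ (fun x => P (g x)) x = P.comp (fderiv ℝ g x) := by
    intro x
    exact (P.hasFDerivAt.comp x (hg.differentiable (by norm_num) x).hasFDerivAt).fderiv
  have hsub : critSet (fun x => P (g x)) ⊆ {x | x ∈ openCube (n+1) ∧ (jac g x).det = 0} := by
    rintro x ⟨hx, hr⟩
    refine ⟨hx, ?_⟩
    by_contra hdet
    have h1 : jac (fun x => P (g x)) x = matL P * jac g x := by
      change matL (fderiv ℝ (fun x => P (g x)) x) = matL P * matL (fderiv ℝ g x)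
      rw [hgd, matL_comp]
    rw [h1, Matrix.rank_mul_eq_left_of_isUnit_det _ _ (isUnit_iff_ne_zero.2 hdet)] at hr
    have h2 : matL P * matL ι.toContinuousLinearMap = 1 := by rw [← matL_comp, hPι, matL_id]
    have h3 := Matrix.rank_mul_le_left (matL P) (matL ι.toContinuousLinearMap)
    rw [h2, Matrix.rank_one, Fintype.card_fin] at h3
    omega
  have hdim : (((n + 1 : ℕ) : ℝ) - 1) = (n:ℝ) := by push_cast; ring
  refine le_trans (sInf_le ⟨fun x => P (g x), P.contDiff.comp hg, fun x hx => ?_, rfl⟩) ?_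
  · obtain ⟨h1, h2⟩ := hclose x hx
    constructor
    · have e : P (g x) - f x = P (g x - ι (f x)) := by rw [map_sub, hPι']
      rw [e]
      refine (P.le_opNorm _).trans ?_
      calc _ ≤ 1 * ‖g x - ι (f x)‖ := by gcongr
        _ ≤ ε := by rw [one_mul]; exact h1
    · have e : fderiv ℝ (fun x => P (g x)) x - fderiv ℝ f x =
          P.comp (fderiv ℝ g x - fderiv ℝ (fun x => ι (f x)) x) := by
        rw [hgd, hfd, ContinuousLinearMap.comp_sub, ← ContinuousLinearMap.comp_assoc, hPι, ContinuousLinearMap.id_comp]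
      rw [e]
      refine (ContinuousLinearMap.opNorm_comp_le _ _).trans ?_
      calc _ ≤ 1 * ‖fderiv ℝ g x - fderiv ℝ (fun x => ι (f x)) x‖ := by gcongr
        _ ≤ ε := by rw [one_mul]; exact h2
  · rw [hdim]
    exact (measure_mono hsub).trans hmeas
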